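/- arXiv:1707.06487 — 2 statements merged into one kernel-verified Lean document; each statement's English description precedes it below -/
import Mathlib

section
/- For all A, W ∈ ℝ^{m×n}, (⟨AᵀA, WᵀW⟩_F + ⟨AᵀW, AᵀW + WᵀA⟩_F) · ⟨WᵀW, WᵀW⟩_F ≥ 2 · (⟨AᵀW, WᵀW⟩_F)². Consequently the second derivative of the SMO objective function J(α_2) = (1−y_1y_2)α_2 − (1/2)·(⟨WᵀW, WᵀW⟩_F)^{1/2} + const, where W depends affinely on α_2 with ∂W/∂α_2 = A, is nonpositive wherever W ≠ 0. -/
/-!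
Write `S = AᵀW + WᵀA`, the symmetrization of `AᵀW`. Since `S` and `WᵀW` are symmetric,
`⟨AᵀW, S⟩ = ½⟨S, S⟩` and `⟨AᵀW, WᵀW⟩ = ½⟨S, WᵀW⟩`, so Cauchy–Schwarz already gives
`⟨AᵀW, S⟩⟨WᵀW, WᵀW⟩ ≥ 2⟨AᵀW, WᵀW⟩²`. The remaining term only helps, because
`⟨AᵀA, WᵀW⟩ = ⟨AWᵀ, AWᵀ⟩ ≥ 0`.
-/

open Matrix

noncomputable section

/-- Frobenius inner product of two real matrices. -/
def frobInner {m n : ℕ} (A B : Matrix (Fin m) (Fin n) ℝ) : ℝ :=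
  ∑ i, ∑ j, A i j * B i j

/-- Frobenius norm of a real matrix. -/
def frobNorm {m n : ℕ} (A : Matrix (Fin m) (Fin n) ℝ) : ℝ :=
  Real.sqrt (frobInner A A)

lemma frobInner_eq_trace {m n : ℕ} (A B : Matrix (Fin m) (Fin n) ℝ) :
    frobInner A B = (Aᵀ * B).trace := by
  simp only [frobInner, Matrix.trace, Matrix.diag, Matrix.mul_apply, Matrix.transpose_apply]
  exact Finset.sum_comm

lemma frobInner_self_nonneg {m n : ℕ} (A : Matrix (Fin m) (Fin n) ℝ) : 0 ≤ frobInner A A :=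
  Finset.sum_nonneg fun _ _ => Finset.sum_nonneg fun _ _ => mul_self_nonneg _

lemma frobInner_transpose {m n : ℕ} (A B : Matrix (Fin m) (Fin n) ℝ) :
    frobInner Aᵀ Bᵀ = frobInner A B :=
  Finset.sum_comm

lemma frobInner_add_left {m n : ℕ} (A B C : Matrix (Fin m) (Fin n) ℝ) :
    frobInner (A + B) C = frobInner A C + frobInner B C := by
  simp [frobInner, add_mul, Finset.sum_add_distrib]

lemma frobInner_cauchy_schwarz {m n : ℕ} (A B : Matrix (Fin m) (Fin n) ℝ) :
    frobInner A B ^ 2 ≤ frobInner A A * frobInner B B := by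
  simpa [frobInner, Fintype.sum_prod_type, sq] using
    Finset.sum_mul_sq_le_sq_mul_sq Finset.univ
      (fun p : Fin m × Fin n => A p.1 p.2) (fun p => B p.1 p.2)

/-- Pairing with a symmetric matrix only sees the symmetric part of the other argument. -/
lemma frobInner_add_transpose_left {n : ℕ} (M S : Matrix (Fin n) (Fin n) ℝ) (hS : Sᵀ = S) :
    frobInner (M + Mᵀ) S = 2 * frobInner M S := by
  have h := frobInner_transpose M S
  rw [hS] at h
  rw [frobInner_add_left, h, two_mul]

lemma frobInner_gram_nonneg {m n : ℕ} (A W : Matrix (Fin m) (Fin n) ℝ) :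
    0 ≤ frobInner (Aᵀ * A) (Wᵀ * W) := by
  have h : frobInner (Aᵀ * A) (Wᵀ * W) = frobInner (A * Wᵀ) (A * Wᵀ) := by
    rw [frobInner_eq_trace, frobInner_eq_trace, Matrix.transpose_mul, Matrix.transpose_mul,
      Matrix.transpose_transpose, Matrix.transpose_transpose, ← Matrix.mul_assoc,
      Matrix.trace_mul_comm]
    simp only [Matrix.mul_assoc]
  rw [h]
  exact frobInner_self_nonneg _

/-- For all `A, W ∈ ℝ^{m×n}`,
    `(⟨AᵀA, WᵀW⟩_F + ⟨AᵀW, AᵀW + WᵀA⟩_F) · ⟨WᵀW, WᵀW⟩_F ≥ 2 · (⟨AᵀW, WᵀW⟩_F)²`.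
    This is the numerator of `−∂²J/∂α₂²` in the SMO algorithm for KSMM. -/
theorem stmt_12 {m n : ℕ} (A W : Matrix (Fin m) (Fin n) ℝ) :
    (frobInner (Aᵀ * A) (Wᵀ * W) + frobInner (Aᵀ * W) (Aᵀ * W + Wᵀ * A)) *
        frobInner (Wᵀ * W) (Wᵀ * W) ≥
      2 * frobInner (Aᵀ * W) (Wᵀ * W) ^ 2 := by
  have hT : (Aᵀ * W)ᵀ = Wᵀ * A := by simp
  have hS : (Aᵀ * W + Wᵀ * A)ᵀ = Aᵀ * W + Wᵀ * A := by simp [add_comm]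
  have hG : (Wᵀ * W)ᵀ = Wᵀ * W := by simp
  have h1 := frobInner_add_transpose_left (Aᵀ * W) _ hS
  have h2 := frobInner_add_transpose_left (Aᵀ * W) _ hG
  rw [hT] at h1 h2
  have hcs := frobInner_cauchy_schwarz (Aᵀ * W + Wᵀ * A) (Wᵀ * W)
  rw [h1, h2] at hcs
  have h0 := mul_nonneg (frobInner_gram_nonneg A W) (frobInner_self_nonneg (Wᵀ * W))
  linarith
end
end

section
/- Let m, n, N be positive integers, let V ∈ ℝ^{n×n} be a nonzero symmetric positive semidefinite matrix, let ρ > 0, B' > 0, R' ≥ 0, and let X_1, …, X_N ∈ ℝ^{m×n} satisfy ‖X_i‖_H(V) ≤ R' for all i. For each i = 1, …, N let Φ_i : ℝ → ℝ be a ρ-Lipschitz function. Define F∘S = {(Φ_1(B_V(W, X_1)), …, Φ_N(B_V(W, X_N))) : W ∈ ℝ^{m×n}, ‖W‖_H(V) ≤ B'} ⊆ ℝ^N. Then R(F∘S) ≤ ρ·B'·R' / √N. -/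
/-!
Two facts carry the bound. Talagrand's contraction principle (`contraction`) replaces each `Φᵢ`
by multiplication by `ρ` inside the averaged supremum, one sign at a time: for a single pair of
signs it is the inequality `Φ(x) - Φ(y) ≤ ρ|x - y|`, with `|x - y| = ±(x - y)`. For the resulting linear class,
a factorisation `V = CᵀC` turns `B_V` into a Euclidean inner product
(`exists_feature_map`), so Cauchy–Schwarz bounds the supremum by `B' ‖∑ σᵢ xᵢ‖`, and the mean of
`‖∑ σᵢ xᵢ‖²` over all signs is `∑ ‖xᵢ‖² ≤ N R'²` by the parallelogram law (`sum_sign_norm_sq`).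
-/

open Matrix

noncomputable section

/-- The ±1 sign associated to a boolean. -/
def signv (b : Bool) : ℝ := if b then 1 else -1

/-- The Rademacher complexity of a set `A ⊆ ℝ^N`:
    `R(A) = (1/N) · 2^{−N} · Σ_{σ ∈ {−1,1}^N} sup_{a ∈ A} Σᵢ σᵢ aᵢ`. -/
def rademacher {N : ℕ} (A : Set (Fin N → ℝ)) : ℝ :=
  (1 / N : ℝ) * (1 / 2 ^ N) *
    ∑ σ : Fin N → Bool, sSup ((fun a => ∑ i, signv (σ i) * a i) '' A)

/-- The bilinear form `B_V(W,X) = ⟨WᵀX, V⟩_F / ‖V‖_F`. -/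
def BV {m n : ℕ} (V : Matrix (Fin n) (Fin n) ℝ) (W X : Matrix (Fin m) (Fin n) ℝ) : ℝ :=
  frobInner (Wᵀ * X) V / frobNorm V

/-- The seminorm `‖X‖_H(V) = (B_V(X,X))^{1/2}`. -/
def Hnorm {m n : ℕ} (V : Matrix (Fin n) (Fin n) ℝ) (X : Matrix (Fin m) (Fin n) ℝ) : ℝ :=
  Real.sqrt (BV V X X)

/-- Summing over sign vectors of length `N + 1` is summing over the first sign and the rest. -/
theorem sum_bool_cons {N : ℕ} (F : (Fin (N + 1) → Bool) → ℝ) :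
    ∑ σ, F σ = ∑ τ : Fin N → Bool, (F (Fin.cons true τ) + F (Fin.cons false τ)) := by
  rw [← (Fin.consEquiv (fun _ : Fin (N + 1) => Bool)).sum_comp, Fintype.sum_prod_type,
    Fintype.sum_bool, ← Finset.sum_add_distrib]
  rfl

theorem abs_signv (b : Bool) : |signv b| = 1 := by
  cases b <;> simp [signv]

/-- The single-sign step of the contraction principle. -/
theorem two_point {ι : Type*} [Nonempty ι] (h f : ι → ℝ) (φ : ℝ → ℝ) (ρ C D : ℝ) (hρ : 0 < ρ)
    (hh : ∀ t, |h t| ≤ C) (hf : ∀ t, |f t| ≤ D)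
    (hφ : ∀ α β : ℝ, |φ α - φ β| ≤ ρ * |α - β|) :
    (⨆ t, (h t + φ (f t))) + (⨆ t, (h t - φ (f t))) ≤
      (⨆ t, (h t + ρ * f t)) + (⨆ t, (h t - ρ * f t)) := by
  have bd1 : BddAbove (Set.range fun t => h t + ρ * f t) := by
    refine ⟨C + ρ * D, ?_⟩
    rintro _ ⟨t, rfl⟩
    have h1 := (abs_le.1 (hh t)).2
    have h2 := mul_le_mul_of_nonneg_left (abs_le.1 (hf t)).2 hρ.le
    simp only
    linarith
  have bd2 : BddAbove (Set.range fun t => h t - ρ * f t) := by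
    refine ⟨C + ρ * D, ?_⟩
    rintro _ ⟨t, rfl⟩
    have h1 := (abs_le.1 (hh t)).2
    have h2 := mul_le_mul_of_nonneg_left (abs_le.1 (hf t)).1 hρ.le
    simp only
    linarith
  refine ciSup_add_ciSup_le fun t s => ?_
  have key := (abs_le.1 (hφ (f t) (f s))).2
  -- The sign of `f t - f s` decides which of the two points goes to which supremum.
  rcases le_total 0 (f t - f s) with hs | hs
  · rw [abs_of_nonneg hs] at key
    have h1 := le_ciSup bd1 t
    have h2 := le_ciSup bd2 s
    linarith
  · rw [abs_of_nonpos hs] at key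
    have h1 := le_ciSup bd1 s
    have h2 := le_ciSup bd2 t
    linarith

/-- The contraction principle. The offset `g` makes the induction on the number of signs go
through: it absorbs the coordinates already treated. -/
theorem contraction {ι : Type*} [Nonempty ι] (ρ D : ℝ) (hρ : 0 < ρ) {N : ℕ} :
    ∀ (f : Fin N → ι → ℝ) (Φ : Fin N → ℝ → ℝ) (g : ι → ℝ) (C : ℝ),
      (∀ t, |g t| ≤ C) → (∀ i t, |f i t| ≤ D) →
      (∀ i, ∀ α β : ℝ, |Φ i α - Φ i β| ≤ ρ * |α - β|) →
      ∑ σ : Fin N → Bool, (⨆ t, (g t + ∑ i, signv (σ i) * Φ i (f i t))) ≤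
        ∑ σ : Fin N → Bool, (⨆ t, (g t + ∑ i, signv (σ i) * (ρ * f i t))) := by
  induction N with
  | zero => intro f Φ g C _ _ _; simp
  | succ N ih =>
    intro f Φ g C hg hf hΦ
    have hΦb : ∀ t, |Φ 0 (f 0 t)| ≤ |Φ 0 0| + ρ * D := by
      intro t
      have h1 := hΦ 0 (f 0 t) 0
      have h2 := abs_sub_abs_le_abs_sub (Φ 0 (f 0 t)) (Φ 0 0)
      have h3 := mul_le_mul_of_nonneg_left (hf 0 t) hρ.le
      rw [sub_zero] at h1
      linarith
    have hg' : ∀ b t, |g t + signv b * Φ 0 (f 0 t)| ≤ C + (|Φ 0 0| + ρ * D) := by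
      intro b t
      refine (abs_add_le _ _).trans ?_
      rw [abs_mul, abs_signv, one_mul]
      exact add_le_add (hg t) (hΦb t)
    have step : ∀ b, _ := fun b => ih (fun i => f i.succ) (fun i => Φ i.succ)
      (fun t => g t + signv b * Φ 0 (f 0 t)) _ (hg' b) (fun i => hf i.succ) (fun i => hΦ i.succ)
    rw [sum_bool_cons, sum_bool_cons]
    simp only [Fin.sum_univ_succ, Fin.cons_zero, Fin.cons_succ, ← add_assoc]
    rw [Finset.sum_add_distrib]
    refine (add_le_add (step true) (step false)).trans ?_
    rw [← Finset.sum_add_distrib]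
    refine Finset.sum_le_sum fun τ _ => ?_
    have hb : ∀ t, |g t + ∑ i, signv (τ i) * (ρ * f i.succ t)| ≤ C + ∑ _i : Fin N, ρ * D := by
      intro t
      refine (abs_add_le _ _).trans (add_le_add (hg t) ?_)
      refine (Finset.abs_sum_le_sum_abs _ _).trans (Finset.sum_le_sum fun i _ => ?_)
      rw [abs_mul, abs_signv, one_mul, abs_mul, abs_of_pos hρ]
      exact mul_le_mul_of_nonneg_left (hf _ t) hρ.le
    have tp := two_point (fun t => g t + ∑ i, signv (τ i) * (ρ * f i.succ t)) (f 0) (Φ 0) ρ _ D hρ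
      hb (hf 0) (hΦ 0)
    have hT : signv true = 1 := by simp [signv]
    have hF : signv false = -1 := by simp [signv]
    refine (le_of_eq ?_).trans (tp.trans_eq ?_) <;>
      refine congrArg₂ (fun a b : ℝ => a + b) (iSup_congr fun t => ?_) (iSup_congr fun t => ?_) <;>
      simp only [hT, hF] <;> ring

/-- The second moment of a signed sum; the offset `y` serves the induction. -/
theorem sum_sign_norm_sq {E : Type*} [NormedAddCommGroup E] [InnerProductSpace ℝ E] {N : ℕ} :
    ∀ (x : Fin N → E) (y : E),
      ∑ σ : Fin N → Bool, ‖y + ∑ i, signv (σ i) • x i‖ ^ 2 =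
        2 ^ N * (‖y‖ ^ 2 + ∑ i, ‖x i‖ ^ 2) := by
  induction N with
  | zero => intro x y; simp
  | succ N ih =>
    intro x y
    rw [sum_bool_cons]
    simp only [Fin.sum_univ_succ, Fin.cons_zero, Fin.cons_succ, ← add_assoc]
    rw [Finset.sum_add_distrib, ih, ih]
    have h := parallelogram_law_with_norm ℝ y (x 0)
    have h1 : signv true • x 0 = x 0 := by simp [signv]
    have h2 : y + signv false • x 0 = y - x 0 := by simp [signv, sub_eq_add_neg]
    rw [h1, h2]
    rw [pow_succ]
    linear_combination (2 : ℝ) ^ N * h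

/-- Writing `V = CᵀC`, the feature map is `W ↦ W Cᵀ / √‖V‖_F`, with matrices viewed as Euclidean
vectors. -/
theorem exists_feature_map {m n : ℕ} (V : Matrix (Fin n) (Fin n) ℝ) (hV : V.PosSemidef) :
    ∃ L : Matrix (Fin m) (Fin n) ℝ → EuclideanSpace ℝ (Fin m × Fin n),
      ∀ W X, BV V W X = inner ℝ (L W) (L X) := by
  obtain ⟨C, rfl⟩ : ∃ C, V = Cᴴ * C := by
    open scoped MatrixOrder Matrix.Norms.L2Operator in
    exact CStarAlgebra.nonneg_iff_eq_star_mul_self.mp hV.nonneg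
  set c := frobNorm (Cᴴ * C) with hc
  have hc0 : 0 ≤ c := Real.sqrt_nonneg _
  refine ⟨fun W => WithLp.toLp 2 fun p => (W * Cᵀ) p.1 p.2 / Real.sqrt c, fun W X => ?_⟩
  have hs : ∀ a b : ℝ, b / √c * (a / √c) = a * b / c := by
    intro a b
    rw [div_mul_div_comm, Real.mul_self_sqrt hc0, mul_comm]
  have e : frobInner (Wᵀ * X) (Cᴴ * C) = ((W * Cᵀ)ᵀ * (X * Cᵀ)).trace := by
    have : frobInner (Wᵀ * X) (Cᴴ * C) = ((Wᵀ * X) * (Cᴴ * C)ᵀ).trace := by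
      simp only [frobInner, Matrix.trace, Matrix.diag, Matrix.mul_apply (M := Wᵀ * X),
        Matrix.transpose_apply]
    rw [this, Matrix.conjTranspose_eq_transpose_of_trivial, Matrix.transpose_mul,
      Matrix.transpose_mul, Matrix.transpose_transpose, Matrix.mul_assoc C, Matrix.trace_mul_comm C]
    simp only [Matrix.mul_assoc]
  rw [BV, ← hc, e, PiLp.inner_apply]
  simp only [RCLike.inner_apply, conj_trivial, hs]
  rw [← Finset.sum_div, Fintype.sum_prod_type, Finset.sum_comm]
  congr 1

/-- Rademacher complexity bound for the loss class of KSMM: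
    if each `Φᵢ` is `ρ`-Lipschitz, `‖Xᵢ‖_H(V) ≤ R'` and the class ranges over
    `‖W‖_H(V) ≤ B'`, then `R(F∘S) ≤ ρ·B'·R'/√N`. -/
theorem stmt_16 {m n N : ℕ} (hm : 0 < m) (hn : 0 < n) (hN : 0 < N)
    (V : Matrix (Fin n) (Fin n) ℝ) (hV : V.PosSemidef) (hV0 : V ≠ 0)
    (ρ B' R' : ℝ) (hρ : 0 < ρ) (hB' : 0 < B') (hR' : 0 ≤ R')
    (X : Fin N → Matrix (Fin m) (Fin n) ℝ) (hX : ∀ i, Hnorm V (X i) ≤ R')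
    (Φ : Fin N → ℝ → ℝ)
    (hΦ : ∀ i, ∀ α β : ℝ, |Φ i α - Φ i β| ≤ ρ * |α - β|) :
    rademacher {v : Fin N → ℝ |
        ∃ W : Matrix (Fin m) (Fin n) ℝ, Hnorm V W ≤ B' ∧
          v = fun i => Φ i (BV V W (X i))} ≤
      ρ * B' * R' / Real.sqrt N := by
  obtain ⟨L, hL⟩ := exists_feature_map (m := m) V hV
  have hH : ∀ W : Matrix (Fin m) (Fin n) ℝ, Hnorm V W = ‖L W‖ := fun W => by
    rw [Hnorm, hL, real_inner_self_eq_norm_sq, Real.sqrt_sq (norm_nonneg _)]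
  have hL0 : Hnorm V (0 : Matrix (Fin m) (Fin n) ℝ) ≤ B' := by
    simpa [Hnorm, BV, frobInner] using hB'.le
  let ι := {W : Matrix (Fin m) (Fin n) ℝ // Hnorm V W ≤ B'}
  have : Nonempty ι := ⟨⟨0, hL0⟩⟩
  have hxi : ∀ i, ‖L (X i)‖ ≤ R' := fun i => (hH _).symm.trans_le (hX i)
  have hW : ∀ t : ι, ‖L t.1‖ ≤ B' := fun t => (hH _).symm.trans_le t.2
  have hf : ∀ i (t : ι), |BV V t.1 (X i)| ≤ B' * R' := fun i t => by
    rw [hL]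
    exact (abs_real_inner_le_norm _ _).trans
      (mul_le_mul (hW t) (hxi i) (norm_nonneg _) hB'.le)
  have hset : ∀ σ : Fin N → Bool,
      sSup ((fun a : Fin N → ℝ => ∑ i, signv (σ i) * a i) '' {v : Fin N → ℝ |
        ∃ W : Matrix (Fin m) (Fin n) ℝ, Hnorm V W ≤ B' ∧
          v = fun i => Φ i (BV V W (X i))}) =
      ⨆ t : ι, ((0 : ℝ) + ∑ i, signv (σ i) * Φ i (BV V t.1 (X i))) := by
    intro σ
    rw [← sSup_range]
    congr 1
    ext y
    constructor
    · rintro ⟨_, ⟨W, hW, rfl⟩, rfl⟩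
      exact ⟨⟨W, hW⟩, by simp⟩
    · rintro ⟨⟨W, hW⟩, rfl⟩
      exact ⟨_, ⟨W, hW, rfl⟩, by simp⟩
  have hcon := contraction (ι := ι) ρ (B' * R') hρ (fun i t => BV V t.1 (X i)) Φ
    (fun _ => (0 : ℝ)) 0 (by simp) hf hΦ
  have hlin : ∀ σ : Fin N → Bool,
      (⨆ t : ι, ((0 : ℝ) + ∑ i, signv (σ i) * (ρ * BV V t.1 (X i)))) ≤
        ρ * B' * ‖∑ i, signv (σ i) • L (X i)‖ := by
    intro σ
    refine ciSup_le fun t => ?_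
    have e : (0 : ℝ) + ∑ i, signv (σ i) * (ρ * BV V t.1 (X i)) =
        ρ * inner ℝ (L t.1) (∑ i, signv (σ i) • L (X i)) := by
      rw [zero_add, inner_sum, Finset.mul_sum]
      refine Finset.sum_congr rfl fun i _ => ?_
      rw [hL, real_inner_smul_right]
      ring
    rw [e, mul_assoc]
    refine mul_le_mul_of_nonneg_left ((real_inner_le_norm _ _).trans ?_) hρ.le
    exact mul_le_mul_of_nonneg_right (hW t) (norm_nonneg _)
  have hNpos : (0 : ℝ) < N := by exact_mod_cast hN
  have hmom : ∑ σ : Fin N → Bool, ‖∑ i, signv (σ i) • L (X i)‖ ≤ 2 ^ N * (√N * R') := by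
    have h2 := sum_sign_norm_sq (fun i => L (X i)) 0
    simp only [zero_add, norm_zero, ne_eq, OfNat.ofNat_ne_zero, not_false_eq_true, zero_pow] at h2
    have h3 : ∑ i, ‖L (X i)‖ ^ 2 ≤ N * R' ^ 2 := by
      refine (Finset.sum_le_sum fun i _ => pow_le_pow_left₀ (norm_nonneg _) (hxi i) 2).trans ?_
      simp
    have h4 := sq_sum_le_card_mul_sum_sq (s := (Finset.univ : Finset (Fin N → Bool)))
      (f := fun σ => ‖∑ i, signv (σ i) • L (X i)‖)
    rw [h2] at h4
    have hcard : ((Finset.univ : Finset (Fin N → Bool)).card : ℝ) = 2 ^ N := by simp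
    rw [hcard] at h4
    refine abs_le_of_sq_le_sq' ?_ (by positivity) |>.2
    refine h4.trans ?_
    rw [mul_pow, mul_pow, Real.sq_sqrt hNpos.le, ← mul_assoc, ← sq]
    exact mul_le_mul_of_nonneg_left h3 (by positivity)
  rw [rademacher, Finset.sum_congr rfl fun σ _ => hset σ]
  have htot := (hcon.trans (Finset.sum_le_sum fun σ _ => hlin σ))
  rw [← Finset.mul_sum] at htot
  have htot2 := htot.trans (mul_le_mul_of_nonneg_left hmom (mul_pos hρ hB').le)
  refine (mul_le_mul_of_nonneg_left htot2 (by positivity)).trans_eq ?_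
  have hsq : √(N : ℝ) * √N = N := Real.mul_self_sqrt hNpos.le
  have hs0 : √(N : ℝ) ≠ 0 := (Real.sqrt_pos.2 hNpos).ne'
  field_simp
  rw [sq, hsq]
end
end
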